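/- Let K ∈ ℝ^{D₁ × N} have full row rank, C := K Kᵀ, V ∈ ℝ^{D₂ × N}, and set W := V Kᵀ C⁻¹ (the unconstrained least-squares memory). Let k_* ∈ ℝ^{D₁} be nonzero, v_* ∈ ℝ^{D₂}, Λ := (v_* − W k_*)/(k_*ᵀ C⁻¹ k_*), and Ŵ := W + Λ (C⁻¹ k_*)ᵀ. Then Ŵ minimizes the Frobenius norm ‖W' K − V‖_F over all W' ∈ ℝ^{D₂ × D₁} satisfying the constraint W' k_* = v_*. -/

import Mathlib

/-! Write `Δ = W' - Ŵ` for a competitor `W'`, so that `Δ k_* = 0`. The residuals satisfy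
`W' K - V = (Ŵ K - V) + Δ K`, and it suffices that the two summands are orthogonal for the
Frobenius inner product. Indeed `(Ŵ K - V) (Δ K)ᵀ = (Ŵ C - V Kᵀ) Δᵀ = Λ k_*ᵀ Δᵀ = Λ (Δ k_*)ᵀ = 0`,
using `W C = V Kᵀ`. Feasibility of `Ŵ` needs `k_*ᵀ C⁻¹ k_* ≠ 0`, which follows from the positive
definiteness of `C` (`posDef_mul_transpose_of_rank_eq`). -/

open Matrix

/-- The Frobenius norm of a real matrix. -/
noncomputable def frobNorm {m n : ℕ} (M : Matrix (Fin m) (Fin n) ℝ) : ℝ :=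
  Real.sqrt (∑ i, ∑ j, M i j ^ 2)

theorem posDef_mul_transpose_of_rank_eq {m n : ℕ} (K : Matrix (Fin m) (Fin n) ℝ)
    (hK : K.rank = m) : (K * Kᵀ).PosDef := by
  have hpsd : (K * Kᵀ).PosSemidef := by
    simpa [conjTranspose_eq_transpose_of_trivial] using posSemidef_self_mul_conjTranspose K
  refine hpsd.posDef_iff_isUnit.mpr ?_
  rw [← linearIndependent_rows_iff_isUnit, linearIndependent_iff_card_eq_finrank_span,
    Set.finrank, ← rank_eq_finrank_span_row, rank_self_mul_transpose, hK, Fintype.card_fin]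

/-- One half of Pythagoras: adding a Frobenius-orthogonal matrix does not decrease the norm. -/
theorem frobNorm_le_add_of_mul_transpose_eq_zero {m n : ℕ} (A B : Matrix (Fin m) (Fin n) ℝ)
    (h : A * Bᵀ = 0) : frobNorm A ≤ frobNorm (A + B) := by
  refine Real.sqrt_le_sqrt (Finset.sum_le_sum fun i _ => ?_)
  have hi : ∑ j, A i j * B i j = 0 := by
    simpa [mul_apply] using congrFun (congrFun h i) i
  have hexp : ∑ j, (A + B) i j ^ 2 =
      ∑ j, A i j ^ 2 + 2 * ∑ j, A i j * B i j + ∑ j, B i j ^ 2 := by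
    rw [Finset.mul_sum, ← Finset.sum_add_distrib, ← Finset.sum_add_distrib]
    exact Finset.sum_congr rfl fun j _ => by rw [Matrix.add_apply]; ring
  rw [hexp, hi]
  have : 0 ≤ ∑ j, B i j ^ 2 := Finset.sum_nonneg fun j _ => sq_nonneg _
  linarith

/-- **ROME solves the constrained least-squares problem.**
With `K` of full row rank, `C := K Kᵀ`, `W := V Kᵀ C⁻¹` the unconstrained
least-squares memory, `k_*` nonzero, `Λ := (v_* − W k_*)/(k_*ᵀ C⁻¹ k_*)` and
`Ŵ := W + Λ (C⁻¹ k_*)ᵀ`, the matrix `Ŵ` minimizes `‖W' K − V‖_F` over all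
`W'` satisfying `W' k_* = v_*`. -/
theorem rome_constrained_least_squares {D₁ D₂ N : ℕ}
    (K : Matrix (Fin D₁) (Fin N) ℝ) (hK : K.rank = D₁)
    (C : Matrix (Fin D₁) (Fin D₁) ℝ) (hC : C = K * Kᵀ)
    (V : Matrix (Fin D₂) (Fin N) ℝ)
    (W : Matrix (Fin D₂) (Fin D₁) ℝ) (hW : W = V * Kᵀ * C⁻¹)
    (kstar : Fin D₁ → ℝ) (hk : kstar ≠ 0) (vstar : Fin D₂ → ℝ)
    (Λ : Fin D₂ → ℝ)
    (hΛ : Λ = (kstar ⬝ᵥ C⁻¹.mulVec kstar)⁻¹ • (vstar - W.mulVec kstar))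
    (What : Matrix (Fin D₂) (Fin D₁) ℝ)
    (hWhat : What = W + vecMulVec Λ (C⁻¹.mulVec kstar)) :
    What.mulVec kstar = vstar ∧
    ∀ W' : Matrix (Fin D₂) (Fin D₁) ℝ, W'.mulVec kstar = vstar →
      frobNorm (What * K - V) ≤ frobNorm (W' * K - V) := by
  have hpd : C.PosDef := hC ▸ posDef_mul_transpose_of_rank_eq K hK
  have hdet : IsUnit C.det := (isUnit_iff_isUnit_det C).mp hpd.isUnit
  have hCt : Cᵀ = C := by rw [hC, transpose_mul, transpose_transpose]
  have hd : kstar ⬝ᵥ C⁻¹.mulVec kstar ≠ 0 := by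
    have := hpd.inv.dotProduct_mulVec_pos hk
    rw [star_trivial] at this
    exact this.ne'
  have hfeas : What.mulVec kstar = vstar := by
    rw [hWhat, add_mulVec, vecMulVec_mulVec, dotProduct_comm, hΛ]
    ext i
    simp only [Pi.add_apply, Pi.smul_apply, Pi.sub_apply, smul_eq_mul, MulOpposite.smul_eq_mul_unop,
      MulOpposite.unop_op]
    field_simp
    ring
  refine ⟨hfeas, fun W' hW' => ?_⟩
  have hΔ : (W' - What).mulVec kstar = 0 := by rw [sub_mulVec, hW', hfeas, sub_self]
  have hWC : W * C = V * Kᵀ := by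
    rw [hW, Matrix.mul_assoc, nonsing_inv_mul C hdet, Matrix.mul_one]
  have hkC : C⁻¹.mulVec kstar ᵥ* C = kstar := by
    rw [← mulVec_transpose, hCt, mulVec_mulVec, mul_nonsing_inv C hdet, one_mulVec]
  have horth : (What * K - V) * ((W' - What) * K)ᵀ = 0 := by
    calc (What * K - V) * ((W' - What) * K)ᵀ
        = (What * C - V * Kᵀ) * (W' - What)ᵀ := by
          rw [transpose_mul, ← Matrix.mul_assoc, Matrix.sub_mul, Matrix.mul_assoc What, ← hC]
      _ = vecMulVec Λ kstar * (W' - What)ᵀ := by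
          rw [hWhat, Matrix.add_mul, hWC, add_sub_cancel_left, vecMulVec_mul, hkC]
      _ = 0 := by
          rw [vecMulVec_mul, vecMul_transpose, hΔ, vecMulVec_zero]
  have hsplit : W' * K - V = (What * K - V) + (W' - What) * K := by
    rw [Matrix.sub_mul]; abel
  rw [hsplit]
  exact frobNorm_le_add_of_mul_transpose_eq_zero _ _ horth
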